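/- Let m, n ≥ 1, U ⊆ ℝᵐ open, and let φ : U → ℝⁿ be a smooth Euclidean biharmonic morphism. Set λ²(x) = |Dφₓ|²/n (the square of its dilation), where |Dφₓ|² is the squared Hilbert–Schmidt norm of the derivative. Then for every open set V ⊆ ℝⁿ and every smooth function f : V → ℝ, one has Δ²(f∘φ) = λ⁴ · (Δ²f)∘φ on φ⁻¹(V). -/

import Mathlib

/-!
Fix `x`, put `p = φ x`, and let `P` be the Taylor polynomial of degree 4 of `f` at `p`
(`exists_taylor`). The difference `f - P` has vanishing 4-jet at `p`, so `(f - P) ∘ φ` has zero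
fourth derivative at `x` (`iter_comp_eq_zero`), and `Δ²` only sees that derivative (`bilap_eq`).
Hence `Δ²(f ∘ φ)(x) = Δ²(P ∘ φ)(x)`.

As `P` has degree 4, `Δ²P` is the constant `c = Δ²f(p)`. For a component `a`, the quartic
`g(z) = (z_a - p_a)⁴` satisfies `Δ²g = 24` everywhere (`bilap_coord`), so `P - (c / 24) g` is a
biharmonic function on `ℝⁿ`, and the morphism property gives
`Δ²(P ∘ φ)(x) = (c / 24) Δ²(g ∘ φ)(x)`. Since `g ∘ φ` is the fourth power of a function
vanishing at `x`, its bilaplacian there is `24 |∇φ_a(x)|⁴` (`bilap_pow_four`). Altogether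
`Δ²(f ∘ φ)(x) = |∇φ_a(x)|⁴ Δ²f(p)` for every component `a` (`bilap_comp`).

Applying this to one function with `Δ²f = 24` and to two components shows that `|∇φ_a(x)|` does not
depend on `a`. The squared Hilbert–Schmidt norm is `∑_a |∇φ_a|²`, so `|∇φ_a|² = |Dφ|² / n = λ²`.
-/

noncomputable section

abbrev E (n : ℕ) := EuclideanSpace ℝ (Fin n)

/-- Partial derivative in the `i`-th coordinate direction. -/
def pd {m : ℕ} (u : E m → ℝ) (i : Fin m) : E m → ℝ :=
  fun x => fderiv ℝ u x (EuclideanSpace.single i 1)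

/-- Euclidean Laplacian `Δu = Σᵢ ∂²u/∂xᵢ²`. -/
def lap {m : ℕ} (u : E m → ℝ) : E m → ℝ :=
  fun x => ∑ i, pd (pd u i) i x

/-- `φ : U → ℝⁿ` is a Euclidean biharmonic morphism if for every open `V ⊆ ℝⁿ` and every
smooth biharmonic `f : V → ℝ`, the composition `f ∘ φ` is biharmonic on `U ∩ φ⁻¹(V)`. -/
def IsBiharmonicMorphism {m n : ℕ} (U : Set (E m)) (φ : E m → E n) : Prop :=
  ∀ V : Set (E n), IsOpen V → ∀ f : E n → ℝ, ContDiffOn ℝ (⊤ : ℕ∞) f V →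
    (∀ y ∈ V, lap (lap f) y = 0) →
    ∀ x ∈ U ∩ φ ⁻¹' V, lap (lap (f ∘ φ)) x = 0

/-- Squared Hilbert–Schmidt norm of the derivative, `|Dφₓ|² = Σᵢ |Dφₓ(eᵢ)|²`. -/
def hsNormSq {m n : ℕ} (φ : E m → E n) (x : E m) : ℝ :=
  ∑ i : Fin m, ‖fderiv ℝ φ x (EuclideanSpace.single i 1)‖ ^ 2

open scoped ContDiff Topology
open Filter Set

/-! ### The bilaplacian in terms of the fourth derivative -/

theorem nat_lt_smooth (j : ℕ) : ((j : ℕ) : ℕ∞ω) < ((⊤ : ℕ∞) : ℕ∞ω) := by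
  exact_mod_cast WithTop.coe_lt_top j

theorem smoothAt {k : ℕ} {u : E k → ℝ} {s : Set (E k)} (hs : IsOpen s)
    (hu : ContDiffOn ℝ (⊤ : ℕ∞) u s) {x : E k} (hx : x ∈ s) : ContDiffAt ℝ (⊤ : ℕ∞) u x :=
  hu.contDiffAt (hs.mem_nhds hx)

theorem diffAt_iter {k : ℕ} {u : E k → ℝ} {s : Set (E k)} (hs : IsOpen s)
    (hu : ContDiffOn ℝ (⊤ : ℕ∞) u s) {x : E k} (hx : x ∈ s) (j : ℕ) :
    DifferentiableAt ℝ (iteratedFDeriv ℝ j u) x :=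
  (smoothAt hs hu hx).differentiableAt_iteratedFDeriv (nat_lt_smooth j)

theorem pd_congr {k : ℕ} {u v : E k → ℝ} {x : E k} (h : u =ᶠ[𝓝 x] v) (i : Fin k) :
    pd u i =ᶠ[𝓝 x] pd v i := by
  filter_upwards [h.fderiv (𝕜 := ℝ)] with y hy
  simp [pd, hy]

/-- The Laplacian is a local operator: it depends only on the germ of the function. -/
theorem lap_congr {k : ℕ} {u v : E k → ℝ} {x : E k} (h : u =ᶠ[𝓝 x] v) :
    lap u =ᶠ[𝓝 x] lap v := by
  have : ∀ᶠ y in 𝓝 x, ∀ i, pd (pd u i) i y = pd (pd v i) i y :=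
    eventually_all.2 fun i => pd_congr (pd_congr h i) i
  filter_upwards [this] with y hy
  simp [lap, hy]

theorem pd_iter {k : ℕ} {u : E k → ℝ} {s : Set (E k)} (hs : IsOpen s)
    (hu : ContDiffOn ℝ (⊤ : ℕ∞) u s) {x : E k} (hx : x ∈ s) (j : ℕ) (v : Fin j → E k)
    (i : Fin k) :
    pd (fun y => iteratedFDeriv ℝ j u y v) i x =
      iteratedFDeriv ℝ (j + 1) u x (Fin.cons (EuclideanSpace.single i 1) v) := by
  rw [(diffAt_iter hs hu hx j).iteratedFDeriv_succ_apply_left']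
  simp [pd]

theorem lap_eq {k : ℕ} {u : E k → ℝ} {s : Set (E k)} (hs : IsOpen s)
    (hu : ContDiffOn ℝ (⊤ : ℕ∞) u s) {x : E k} (hx : x ∈ s) :
    lap u x = ∑ i, iteratedFDeriv ℝ 2 u x
      ![EuclideanSpace.single i 1, EuclideanSpace.single i 1] := by
  unfold lap
  refine Finset.sum_congr rfl fun i _ => ?_
  have : pd u i = fun y => iteratedFDeriv ℝ 1 u y ![EuclideanSpace.single i 1] := by
    ext y; simp [pd]
  rw [this, pd_iter hs hu hx]
  rfl

/-- `Δ²u` at `x` is a linear function of the fourth derivative of `u` at `x` alone, namely its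
double trace. -/
theorem bilap_eq {k : ℕ} {u : E k → ℝ} {s : Set (E k)} (hs : IsOpen s)
    (hu : ContDiffOn ℝ (⊤ : ℕ∞) u s) {x : E k} (hx : x ∈ s) :
    lap (lap u) x = ∑ i, ∑ j, iteratedFDeriv ℝ 4 u x
      ![EuclideanSpace.single i 1, EuclideanSpace.single i 1,
        EuclideanSpace.single j 1, EuclideanSpace.single j 1] := by
  have key : ∀ (l : ℕ) (v : Fin k → Fin l → E k) (i : Fin k), ∀ y ∈ s,
      pd (fun z => ∑ j, iteratedFDeriv ℝ l u z (v j)) i y =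
        ∑ j, iteratedFDeriv ℝ (l + 1) u y (Fin.cons (EuclideanSpace.single i 1) (v j)) := by
    intro l v i y hy
    simp only [← pd_iter hs hu hy]
    unfold pd
    rw [fderiv_fun_sum]
    · simp
    · intro j _
      exact (diffAt_iter hs hu hy l).continuousMultilinear_apply_const _
  have h1 : lap u =ᶠ[𝓝 x] fun z => ∑ j, iteratedFDeriv ℝ 2 u z
      ![EuclideanSpace.single j 1, EuclideanSpace.single j 1] := by
    filter_upwards [hs.mem_nhds hx] with y hy using lap_eq hs hu hy
  rw [(lap_congr h1).eq_of_nhds]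
  unfold lap
  refine Finset.sum_congr rfl fun i _ => ?_
  have h2 := pd_congr (i := i) (x := x) (eventually_of_mem (hs.mem_nhds hx)
    (key 2 (fun j => ![EuclideanSpace.single j 1, EuclideanSpace.single j 1]) i))
  rw [h2.eq_of_nhds, key _ _ _ _ hx]
  rfl

theorem bilap_add {k : ℕ} {u v : E k → ℝ} {s : Set (E k)} (hs : IsOpen s)
    (hu : ContDiffOn ℝ (⊤ : ℕ∞) u s) (hv : ContDiffOn ℝ (⊤ : ℕ∞) v s) {x : E k} (hx : x ∈ s) :
    lap (lap (u + v)) x = lap (lap u) x + lap (lap v) x := by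
  rw [bilap_eq hs (show ContDiffOn ℝ (⊤ : ℕ∞) (u + v) s from hu.add hv) hx, bilap_eq hs hu hx, bilap_eq hs hv hx]
  have h4 := (nat_lt_smooth 4).le
  simp [iteratedFDeriv_add_apply ((smoothAt hs hu hx).of_le h4)
    ((smoothAt hs hv hx).of_le h4), Finset.sum_add_distrib]

theorem bilap_smul {k : ℕ} {u : E k → ℝ} {s : Set (E k)} (hs : IsOpen s)
    (hu : ContDiffOn ℝ (⊤ : ℕ∞) u s) (c : ℝ) {x : E k} (hx : x ∈ s) :
    lap (lap (c • u)) x = c * lap (lap u) x := by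
  rw [bilap_eq hs (show ContDiffOn ℝ (⊤ : ℕ∞) (c • u) s from hu.const_smul c) hx, bilap_eq hs hu hx]
  have h4 := (nat_lt_smooth 4).le
  simp [iteratedFDeriv_const_smul_apply ((smoothAt hs hu hx).of_le h4), Finset.mul_sum]

/-! ### Symmetry of iterated derivatives and the Taylor polynomial -/

/-- The iterated derivative is invariant under transposing two neighbouring arguments. For the
first two arguments this is the symmetry of the second derivative of `y ↦ Dˡu(y)(w)`; the other
transpositions are obtained by differentiating the statement for one derivative less. -/
theorem iter_swap {k : ℕ} {u : E k → ℝ} {s : Set (E k)} (hs : IsOpen s)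
    (hu : ContDiffOn ℝ (⊤ : ℕ∞) u s) (l : ℕ) : ∀ (i : Fin l) (x : E k), x ∈ s →
    ∀ v : Fin (l + 1) → E k,
    iteratedFDeriv ℝ (l + 1) u x (v ∘ Equiv.swap i.castSucc i.succ) =
      iteratedFDeriv ℝ (l + 1) u x v := by
  induction l with
  | zero => intro i; exact i.elim0
  | succ l ih =>
    intro i x hx v
    refine Fin.cases ?_ (fun j => ?_) i
    · set w : Fin l → E k := Fin.tail (Fin.tail v) with hw
      set g : E k → ℝ := fun y => iteratedFDeriv ℝ l u y w with hg
      have hgs : ContDiffAt ℝ 2 g x := by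
        have : ContDiffAt ℝ 2 (iteratedFDeriv ℝ l u) x :=
          (smoothAt hs hu hx).iteratedFDeriv_right (m := 2)
            (by exact_mod_cast (nat_lt_smooth (2 + l)).le)
        exact (ContinuousMultilinearMap.apply ℝ (fun _ : Fin l => E k) ℝ w).contDiff.contDiffAt.comp
          x this
      have key : ∀ v' : Fin (l + 2) → E k, Fin.tail (Fin.tail v') = w →
          iteratedFDeriv ℝ (l + 2) u x v' = fderiv ℝ (fderiv ℝ g) x (v' 0) (v' 1) := by
        intro v' hv'
        rw [(diffAt_iter hs hu hx _).iteratedFDeriv_succ_apply_left']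
        have : (fun y => iteratedFDeriv ℝ (l + 1) u y (Fin.tail v')) =ᶠ[𝓝 x]
            fun y => fderiv ℝ g y (v' 1) := by
          filter_upwards [hs.mem_nhds hx] with y hy
          rw [(diffAt_iter hs hu hy _).iteratedFDeriv_succ_apply_left', hv']
          rfl
        rw [this.fderiv_eq, fderiv_clm_apply
          ((hgs.fderiv_right (m := 1) (by norm_num)).differentiableAt (by norm_num))
          (differentiableAt_const _)]
        simp
      rw [key v rfl, key]
      · have := (hgs.isSymmSndFDerivAt (by simp)) (v 1) (v 0)
        simpa using this
      · rw [hw]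
        ext j
        simp only [Fin.tail, Function.comp]
        rw [Equiv.swap_apply_of_ne_of_ne]
        · simp [Fin.ext_iff]
        · simp [Fin.ext_iff]
    · have hinj : ∀ z : Fin (l + 1),
          Equiv.swap j.succ.castSucc j.succ.succ z.succ =
            (Equiv.swap j.castSucc j.succ z).succ := by
        intro z
        exact (Fin.succ_injective (l + 1)).swap_apply j.castSucc j.succ z
      rw [iteratedFDeriv_succ_apply_left, iteratedFDeriv_succ_apply_left]
      have h0 : (v ∘ Equiv.swap j.succ.castSucc j.succ.succ) 0 = v 0 := by
        simp only [Function.comp]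
        rw [Equiv.swap_apply_of_ne_of_ne]
        · simp [Fin.ext_iff]
        · simp [Fin.ext_iff]
      have ht : Fin.tail (v ∘ Equiv.swap j.succ.castSucc j.succ.succ) =
          Fin.tail v ∘ Equiv.swap j.castSucc j.succ := by
        ext1 z
        simp only [Fin.tail, Function.comp, hinj]
      have hd := diffAt_iter hs hu hx (l + 1)
      rw [h0, ht, ← fderiv_continuousMultilinear_apply_const_apply hd,
        ← fderiv_continuousMultilinear_apply_const_apply hd]
      have : (fun y => iteratedFDeriv ℝ (l + 1) u y
          (Fin.tail v ∘ Equiv.swap j.castSucc j.succ)) =ᶠ[𝓝 x]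
          fun y => iteratedFDeriv ℝ (l + 1) u y (Fin.tail v) := by
        filter_upwards [hs.mem_nhds hx] with y hy using ih j y hy _
      rw [this.fderiv_eq]

/-- Iterated derivatives of a smooth function are symmetric. Adjacent transpositions generate the
symmetric group, so `iter_swap` suffices. -/
theorem iter_perm {k : ℕ} {u : E k → ℝ} {s : Set (E k)} (hs : IsOpen s)
    (hu : ContDiffOn ℝ (⊤ : ℕ∞) u s) {x : E k} (hx : x ∈ s) (l : ℕ) (σ : Equiv.Perm (Fin l))
    (v : Fin l → E k) :
    iteratedFDeriv ℝ l u x (v ∘ σ) = iteratedFDeriv ℝ l u x v := by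
  cases l with
  | zero => congr 1; ext i; exact i.elim0
  | succ l =>
    have hσ : σ ∈ Submonoid.closure
        (Set.range fun i : Fin l ↦ Equiv.swap i.castSucc i.succ) := by
      rw [Equiv.Perm.mclosure_swap_castSucc_succ]; trivial
    induction hσ using Submonoid.closure_induction generalizing v with
    | mem τ h => obtain ⟨i, rfl⟩ := h; exact iter_swap hs hu l i x hx v
    | one => rfl
    | mul a b _ _ ha hb =>
      have : v ∘ ⇑(a * b) = (v ∘ a) ∘ b := rfl
      rw [this, hb, ha]

/-- The Taylor polynomial of degree 4 at `p`: a smooth function on the whole space with the same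
4-jet as `u` at `p`, and with constant fourth derivative. -/
theorem exists_taylor {k : ℕ} {u : E k → ℝ} {s : Set (E k)} (hs : IsOpen s)
    (hu : ContDiffOn ℝ (⊤ : ℕ∞) u s) {p : E k} (hp : p ∈ s) :
    ∃ P : E k → ℝ, ContDiff ℝ (⊤ : ℕ∞) P ∧
      (∀ j ≤ 4, iteratedFDeriv ℝ j P p = iteratedFDeriv ℝ j u p) ∧
      ∀ y, iteratedFDeriv ℝ 4 P y = iteratedFDeriv ℝ 4 u p := by
  classical
  -- the Taylor coefficients, truncated above degree 4
  let q : FormalMultilinearSeries ℝ (E k) ℝ := fun j =>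
    if j ≤ 4 then ((j.factorial : ℝ)⁻¹) • iteratedFDeriv ℝ j u p else 0
  have hq : ∀ j, 5 ≤ j → q j = 0 := fun j hj => if_neg (by omega)
  have h0 := (q.hasFiniteFPowerSeriesOnBall_of_finite hq).comp_sub p
  rw [zero_add] at h0
  set P : E k → ℝ := fun z => q.sum (z - p)
  have hP : ContDiff ℝ (⊤ : ℕ∞) P := by
    have : AnalyticOnNhd ℝ P univ := by
      have := h0.toHasFPowerSeriesOnBall.analyticOnNhd
      simpa using this
    exact contDiffOn_univ.1 (this.contDiffOn uniqueDiffOn_univ)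
  have hj : ∀ j ≤ 4, iteratedFDeriv ℝ j P p = iteratedFDeriv ℝ j u p := by
    intro j hj
    ext v
    -- the `j`-th derivative is the symmetrised coefficient; symmetry makes the `j!` terms equal
    rw [h0.toHasFPowerSeriesOnBall.iteratedFDeriv_eq_sum_of_completeSpace]
    have : ∀ σ : Equiv.Perm (Fin j), q j (fun i => v (σ i)) =
        (j.factorial : ℝ)⁻¹ * iteratedFDeriv ℝ j u p v := by
      intro σ
      rw [← iter_perm hs hu hp j σ v]
      simp [q, hj, Function.comp_def]
    simp only [this, Finset.sum_const, Finset.card_univ, Fintype.card_perm, Fintype.card_fin,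
      nsmul_eq_mul]
    field_simp
  refine ⟨P, hP, hj, fun y => ?_⟩
  -- `D⁵P = 0`, read off from the expansion of `P` re-centred at `z`
  have h5 : ∀ z, fderiv ℝ (iteratedFDeriv ℝ 4 P) z = 0 := by
    intro z
    have hz := h0.changeOrigin (y := z - p) (by simp)
    rw [add_sub_cancel] at hz
    have : iteratedFDeriv ℝ 5 P z = 0 := by
      ext v
      rw [hz.toHasFPowerSeriesOnBall.iteratedFDeriv_eq_sum_of_completeSpace]
      simp [hz.finite 5 le_rfl]
    ext v w
    have h := iteratedFDeriv_succ_apply_left (𝕜 := ℝ) (n := 4) (f := P) (x := z) (Fin.cons v w)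
    rw [this] at h
    exact h.symm
  rw [is_const_of_fderiv_eq_zero
    (hP.differentiable_iteratedFDeriv (nat_lt_smooth 4)) h5 y p, hj 4 le_rfl]

/-! ### Composition with a function of vanishing jet -/

/-- If the `l`-jet of `u` vanishes at `φ x`, so does the `l`-th derivative of `u ∘ φ` at `x`. This
is the quantitative Faà di Bruno bound, in which the bound `C` for the derivatives of `u` is `0`. -/
theorem iter_comp_eq_zero {m n : ℕ} {s : Set (E m)} {t : Set (E n)} (hs : IsOpen s)
    (ht : IsOpen t) {φ : E m → E n} {u : E n → ℝ} (hφ : ContDiffOn ℝ (⊤ : ℕ∞) φ s)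
    (hu : ContDiffOn ℝ (⊤ : ℕ∞) u t) (hst : MapsTo φ s t) {x : E m} (hx : x ∈ s)
    (l : ℕ) (h : ∀ j ≤ l, iteratedFDeriv ℝ j u (φ x) = 0) :
    iteratedFDeriv ℝ l (u ∘ φ) x = 0 := by
  -- `D ≥ 1` bounds every derivative of `φ` that occurs, hence `‖Dⁱφ‖ ≤ D ≤ Dⁱ`
  set D : ℝ := 1 + ∑ i ∈ Finset.range (l + 1), ‖iteratedFDerivWithin ℝ i φ s x‖ with hD
  have hsum : 0 ≤ ∑ i ∈ Finset.range (l + 1), ‖iteratedFDerivWithin ℝ i φ s x‖ :=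
    Finset.sum_nonneg fun _ _ => norm_nonneg _
  have := norm_iteratedFDerivWithin_comp_le (n := l) (C := 0) (D := D) hu hφ
    (by exact_mod_cast le_top) ht.uniqueDiffOn hs.uniqueDiffOn hst hx
    (fun i hi => by
      rw [iteratedFDerivWithin_of_isOpen i ht (hst hx), h i hi, norm_zero])
    (fun i h1 hi => by
      have h2 : ‖iteratedFDerivWithin ℝ i φ s x‖ ≤ D := by
        have := Finset.single_le_sum (f := fun i => ‖iteratedFDerivWithin ℝ i φ s x‖)
          (fun _ _ => norm_nonneg _) (Finset.mem_range.2 (Nat.lt_succ_of_le hi))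
        linarith
      exact h2.trans (le_self_pow₀ (by linarith) (by omega)))
  rw [iteratedFDerivWithin_of_isOpen l hs hx] at this
  simpa using this

/-! ### Product rule and fourth powers -/

theorem contDiffOn_pd {k : ℕ} {u : E k → ℝ} {s : Set (E k)} (hs : IsOpen s)
    (hu : ContDiffOn ℝ (⊤ : ℕ∞) u s) (i : Fin k) : ContDiffOn ℝ (⊤ : ℕ∞) (pd u i) s :=
  (hu.fderiv_of_isOpen hs (by exact_mod_cast le_top)).clm_apply contDiffOn_const

theorem contDiffOn_lap {k : ℕ} {u : E k → ℝ} {s : Set (E k)} (hs : IsOpen s)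
    (hu : ContDiffOn ℝ (⊤ : ℕ∞) u s) : ContDiffOn ℝ (⊤ : ℕ∞) (lap u) s :=
  ContDiffOn.sum fun i _ => contDiffOn_pd hs (contDiffOn_pd hs hu i) i

theorem pd_mul {k : ℕ} {u v : E k → ℝ} {x : E k} (hu : DifferentiableAt ℝ u x)
    (hv : DifferentiableAt ℝ v x) (i : Fin k) :
    pd (fun y => u y * v y) i x = u x * pd v i x + v x * pd u i x := by
  simp [pd, fderiv_fun_mul hu hv]

theorem pd_add {k : ℕ} {u v : E k → ℝ} {x : E k} (hu : DifferentiableAt ℝ u x)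
    (hv : DifferentiableAt ℝ v x) (i : Fin k) :
    pd (fun y => u y + v y) i x = pd u i x + pd v i x := by
  simp [pd, fderiv_fun_add hu hv]

theorem diffAt {k : ℕ} {u : E k → ℝ} {s : Set (E k)} (hs : IsOpen s)
    (hu : ContDiffOn ℝ (⊤ : ℕ∞) u s) {x : E k} (hx : x ∈ s) : DifferentiableAt ℝ u x :=
  (smoothAt hs hu hx).differentiableAt (by simp)

theorem lap_mul {k : ℕ} {u v : E k → ℝ} {s : Set (E k)} (hs : IsOpen s)
    (hu : ContDiffOn ℝ (⊤ : ℕ∞) u s) (hv : ContDiffOn ℝ (⊤ : ℕ∞) v s) {x : E k} (hx : x ∈ s) :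
    lap (fun y => u y * v y) x =
      u x * lap v x + 2 * ∑ i, pd u i x * pd v i x + v x * lap u x := by
  unfold lap
  rw [Finset.mul_sum, Finset.mul_sum, Finset.mul_sum, ← Finset.sum_add_distrib,
    ← Finset.sum_add_distrib]
  refine Finset.sum_congr rfl fun i _ => ?_
  have h1 : pd (fun y => u y * v y) i =ᶠ[𝓝 x] fun y => u y * pd v i y + v y * pd u i y := by
    filter_upwards [hs.mem_nhds hx] with y hy using
      pd_mul (diffAt hs hu hy) (diffAt hs hv hy) i
  have du := diffAt hs hu hx
  have dv := diffAt hs hv hx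
  have dpu := diffAt hs (contDiffOn_pd hs hu i) hx
  have dpv := diffAt hs (contDiffOn_pd hs hv i) hx
  rw [(pd_congr h1 i).eq_of_nhds, pd_add (u := fun y => u y * pd v i y)
    (v := fun y => v y * pd u i y) (du.mul dpv) (dv.mul dpu), pd_mul du dpv, pd_mul dv dpu]
  ring

/-- `Δ(w⁴) = w² (4 w Δw + 12 |∇w|²)`. -/
theorem lap_pow_four {k : ℕ} {w : E k → ℝ} {s : Set (E k)} (hs : IsOpen s)
    (hw : ContDiffOn ℝ (⊤ : ℕ∞) w s) {x : E k} (hx : x ∈ s) :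
    lap (fun y => w y ^ 4) x =
      w x * w x * (4 * (w x * lap w x) + 12 * ∑ i, pd w i x * pd w i x) := by
  have hfun : (fun y => w y ^ 4) = fun y => (w y * w y) * (w y * w y) := by ext y; ring
  have dw := diffAt hs hw hx
  rw [hfun, lap_mul hs (hw.mul hw) (hw.mul hw) hx, lap_mul hs hw hw hx]
  simp only [pd_mul dw dw]
  have : ∑ i, (w x * pd w i x + w x * pd w i x) * (w x * pd w i x + w x * pd w i x) =
      4 * (w x * w x) * ∑ i, pd w i x * pd w i x := by
    rw [Finset.mul_sum]; exact Finset.sum_congr rfl fun i _ => by ring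
  rw [this]; ring

/-- At a zero of `w`, `Δ²(w⁴) = 24 |∇w|⁴`: in `Δ(w² h)`, where `h = 4 w Δw + 12 |∇w|²`, only
`2 |∇w|² h` survives. -/
theorem bilap_pow_four {k : ℕ} {w : E k → ℝ} {s : Set (E k)} (hs : IsOpen s)
    (hw : ContDiffOn ℝ (⊤ : ℕ∞) w s) {x : E k} (hx : x ∈ s) (h0 : w x = 0) :
    lap (lap fun y => w y ^ 4) x = 24 * (∑ i, pd w i x * pd w i x) ^ 2 := by
  have h1 : (lap fun y => w y ^ 4) =ᶠ[𝓝 x] fun y => w y * w y *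
      (4 * (w y * lap w y) + 12 * ∑ i, pd w i y * pd w i y) := by
    filter_upwards [hs.mem_nhds hx] with y hy using lap_pow_four hs hw hy
  have hh : ContDiffOn ℝ (⊤ : ℕ∞)
      (fun y => 4 * (w y * lap w y) + 12 * ∑ i, pd w i y * pd w i y) s :=
    (contDiffOn_const.mul (hw.mul (contDiffOn_lap hs hw))).add (contDiffOn_const.mul
      (ContDiffOn.sum fun i _ => (contDiffOn_pd hs hw i).mul (contDiffOn_pd hs hw i)))
  have dw := diffAt hs hw hx
  rw [(lap_congr h1).eq_of_nhds, lap_mul hs (hw.mul hw) hh hx, lap_mul hs hw hw hx]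
  simp only [pd_mul dw dw, h0]
  simp
  ring

/-- The quartic used to normalise the bilaplacian has `Δ²(z_a - c)⁴ = 24` at every point. -/
theorem bilap_coord {n : ℕ} (a : Fin n) (c : ℝ) (y : E n) :
    lap (lap fun z : E n => (z a - c) ^ 4) y = 24 := by
  set w : E n → ℝ := fun z => z a - c with hw
  have hws : ContDiffOn ℝ (⊤ : ℕ∞) w univ := by
    rw [contDiffOn_univ]; fun_prop
  have hpd : ∀ i, pd w i = fun _ => if i = a then 1 else 0 := by
    intro i
    ext z
    have : HasFDerivAt w (EuclideanSpace.proj a : E n →L[ℝ] ℝ) z :=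
      (EuclideanSpace.proj a : E n →L[ℝ] ℝ).hasFDerivAt.sub_const c
    rw [pd, this.fderiv]
    simp [eq_comm]
  have hlap : ∀ z, lap w z = 0 := by
    intro z
    simp [lap, hpd, pd]
  have hc : ∀ i, pd (fun _ : E n => (12 : ℝ)) i = fun _ => 0 := by
    intro i; ext z; simp [pd]
  have hc0 : lap (fun _ : E n => (12 : ℝ)) y = 0 := by simp [lap, hc, pd]
  have h1 : (lap fun z => w z ^ 4) = fun z => (12 : ℝ) * (w z * w z) := by
    ext z
    rw [lap_pow_four isOpen_univ hws (mem_univ z), hlap]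
    simp [hpd]
    ring
  rw [h1, lap_mul isOpen_univ contDiffOn_const (hws.mul hws) (mem_univ y),
    lap_mul isOpen_univ hws hws (mem_univ y)]
  rw [hc0, hlap]
  norm_num [hpd, hc]

/-! ### The composition law -/

/-- The composition law with `|∇φ_a|⁴` in place of `λ⁴`, valid for each component `a`. -/
theorem bilap_comp {m n : ℕ} {U : Set (E m)} (hU : IsOpen U) {φ : E m → E n}
    (hφ : ContDiffOn ℝ (⊤ : ℕ∞) φ U) (hmor : IsBiharmonicMorphism U φ)
    {V : Set (E n)} (hV : IsOpen V) {f : E n → ℝ} (hf : ContDiffOn ℝ (⊤ : ℕ∞) f V)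
    {x : E m} (hx : x ∈ U ∩ φ ⁻¹' V) (a : Fin n) :
    lap (lap (f ∘ φ)) x = lap (lap f) (φ x) *
      (∑ i, pd (fun y => φ y a) i x * pd (fun y => φ y a) i x) ^ 2 := by
  obtain ⟨P, hP, hPj, hP4⟩ := exists_taylor hV hf hx.2
  set W := U ∩ φ ⁻¹' V with hWdef
  have hW : IsOpen W := hφ.continuousOn.isOpen_inter_preimage hU hV
  have hφW : ContDiffOn ℝ (⊤ : ℕ∞) φ W := hφ.mono inter_subset_left
  have hmaps : MapsTo φ W V := fun _ h => h.2
  have hcomp : ∀ {g : E n → ℝ}, ContDiffOn ℝ (⊤ : ℕ∞) g V →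
      ContDiffOn ℝ (⊤ : ℕ∞) (g ∘ φ) W := fun hg => hg.comp hφW hmaps
  have hPV : ContDiffOn ℝ (⊤ : ℕ∞) P V := hP.contDiffOn
  set c := lap (lap f) (φ x) with hc
  -- `Δ²P` is the constant `c`
  have hPc : ∀ y, lap (lap P) y = c := by
    intro y
    rw [bilap_eq isOpen_univ hP.contDiffOn (mem_univ y), hc, bilap_eq hV hf hx.2, hP4]
  set g : E n → ℝ := fun z => (z a - φ x a) ^ 4 with hg
  have hgs : ContDiff ℝ (⊤ : ℕ∞) g := by rw [hg]; fun_prop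
  -- the biharmonic polynomial `P - (c / 24) g`
  have hbi : lap (lap ((P + (-(c / 24)) • g) ∘ φ)) x = 0 := by
    have hgc : ContDiffOn ℝ (⊤ : ℕ∞) ((-(c / 24)) • g) univ :=
      (hgs.const_smul (-(c / 24))).contDiffOn
    refine hmor univ isOpen_univ (P + (-(c / 24)) • g) (hP.contDiffOn.add hgc)
      (fun y _ => ?_) x ⟨hx.1, mem_univ _⟩
    rw [bilap_add isOpen_univ hP.contDiffOn hgc (mem_univ y),
      bilap_smul isOpen_univ hgs.contDiffOn _ (mem_univ y), hPc, bilap_coord]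
    ring
  have hgφ : lap (lap (g ∘ φ)) x =
      24 * (∑ i, pd (fun y => φ y a) i x * pd (fun y => φ y a) i x) ^ 2 := by
    have hφa : ContDiffOn ℝ (⊤ : ℕ∞) (fun y => φ y a - φ x a) W :=
      ((EuclideanSpace.proj a : E n →L[ℝ] ℝ).contDiff.comp_contDiffOn hφW).sub contDiffOn_const
    have := bilap_pow_four hW hφa hx (sub_self _)
    have hpd : ∀ i, pd (fun y => φ y a - φ x a) i x = pd (fun y => φ y a) i x := by
      intro i; simp [pd, fderiv_sub_const]
    simp only [hpd] at this
    exact this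
  have hsplit1 : (P + (-(c / 24)) • g) ∘ φ = P ∘ φ + (-(c / 24)) • (g ∘ φ) := rfl
  have hgcφ : ContDiffOn ℝ (⊤ : ℕ∞) ((-(c / 24)) • (g ∘ φ)) W :=
    (hcomp hgs.contDiffOn).const_smul (-(c / 24))
  rw [hsplit1, bilap_add hW (hcomp hPV) hgcφ hx,
    bilap_smul hW (hcomp hgs.contDiffOn) _ hx, hgφ] at hbi
  -- the remainder `f - P` contributes nothing
  have hr : ContDiffOn ℝ (⊤ : ℕ∞) (f - P) V := hf.sub hPV
  have hrem : lap (lap ((f - P) ∘ φ)) x = 0 := by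
    rw [bilap_eq hW (hcomp hr) hx, iter_comp_eq_zero hW hV hφW hr hmaps hx 4]
    · simp
    · intro j hj
      have hj' := (nat_lt_smooth j).le
      rw [iteratedFDeriv_sub_apply ((smoothAt hV hf hx.2).of_le hj') (hP.contDiffAt.of_le hj'),
        hPj j hj, sub_self]
  have hsplit2 : f ∘ φ = (f - P) ∘ φ + P ∘ φ := by ext; simp
  rw [hsplit2, bilap_add hW (hcomp hr) (hcomp hPV) hx, hrem]
  linarith

/-- If `φ` is a smooth Euclidean biharmonic morphism with square dilation
`λ² = |Dφ|²/n`, then `Δ²(f∘φ) = λ⁴·(Δ²f)∘φ` for every smooth `f : V → ℝ`. -/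
theorem biharmonicMorphism_bilap_identity {m n : ℕ} (hm : 1 ≤ m) (hn : 1 ≤ n)
    (U : Set (E m)) (hU : IsOpen U) (φ : E m → E n) (hφ : ContDiffOn ℝ (⊤ : ℕ∞) φ U)
    (hmor : IsBiharmonicMorphism U φ) :
    ∀ V : Set (E n), IsOpen V → ∀ f : E n → ℝ, ContDiffOn ℝ (⊤ : ℕ∞) f V →
      ∀ x ∈ U ∩ φ ⁻¹' V,
        lap (lap (f ∘ φ)) x = (hsNormSq φ x / n) ^ 2 * lap (lap f) (φ x) := by
  intro V hV f hf x hx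
  set N : Fin n → ℝ := fun a => ∑ i, pd (fun y => φ y a) i x * pd (fun y => φ y a) i x with hN
  have hN0 : ∀ a, 0 ≤ N a := fun a => Finset.sum_nonneg fun i _ => mul_self_nonneg _
  -- two evaluations of `Δ²(φ_b⁴)` give `N_a² = N_b²`
  have hNeq : ∀ a b, N a = N b := by
    intro a b
    have hg : ContDiffOn ℝ (⊤ : ℕ∞) (fun z : E n => (z b - 0) ^ 4) univ := by
      rw [contDiffOn_univ]; fun_prop
    have ha := bilap_comp hU hφ hmor isOpen_univ hg (x := x) ⟨hx.1, mem_univ _⟩ a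
    have hb := bilap_comp hU hφ hmor isOpen_univ hg (x := x) ⟨hx.1, mem_univ _⟩ b
    rw [ha, bilap_coord] at hb
    exact (sq_eq_sq₀ (hN0 a) (hN0 b)).1 (by simp only [hN]; linarith)
  have hdφ : DifferentiableAt ℝ φ x :=
    (hφ.contDiffAt (hU.mem_nhds hx.1)).differentiableAt (by simp)
  have hpd : ∀ a i, pd (fun y => φ y a) i x =
      (fderiv ℝ φ x (EuclideanSpace.single i 1)) a := by
    intro a i
    have : HasFDerivAt (fun y => φ y a)
        ((EuclideanSpace.proj a : E n →L[ℝ] ℝ).comp (fderiv ℝ φ x)) x :=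
      (EuclideanSpace.proj a : E n →L[ℝ] ℝ).hasFDerivAt.comp x hdφ.hasFDerivAt
    rw [pd, this.fderiv]
    rfl
  let a₀ : Fin n := ⟨0, hn⟩
  have hs : hsNormSq φ x = n * N a₀ := by
    have : hsNormSq φ x = ∑ a, N a := by
      simp only [hsNormSq, hN, EuclideanSpace.norm_sq_eq, hpd]
      rw [Finset.sum_comm]
      exact Finset.sum_congr rfl fun a _ => Finset.sum_congr rfl fun i _ => by
        rw [Real.norm_eq_abs, sq_abs, sq]
    rw [this, Finset.sum_congr rfl fun a _ => hNeq a a₀]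
    simp
  have hn' : (n : ℝ) ≠ 0 := by exact_mod_cast (by omega : n ≠ 0)
  rw [bilap_comp hU hφ hmor hV hf hx a₀, hs, mul_div_cancel_left₀ _ hn', mul_comm]

end
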